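/- Let h ≥ 1 be a natural number, M an h×h real matrix, and N > 0 a real number. Suppose the characteristic polynomial P of M factors over ℝ as P(X) = ∏_{i=1}^{h} (X - λᵢ) with λ₁ = N and -N < λᵢ < N for all 2 ≤ i ≤ h. Let Δ := N·I - (block matrix with blocks (0, M; M, 0)). Then 0 is a root of the characteristic polynomial of Δ of multiplicity exactly 1, and the product of the nonzero real roots of the characteristic polynomial of Δ, counted with multiplicity, equals |P(-N) · P'(N)|. -/

import Mathlib

open Polynomial

/-!
Conjugating by unipotent block matrices shows that a matrix with blocks `(A, B; B, A)` has
characteristic polynomial `charpoly (A + B) * charpoly (A - B)`. With `P` the characteristic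
polynomial of `M`, this turns the characteristic polynomial of `Δ` into
`Q(X) = (-1)^h P(N - X) P(X - N)`. A monic split polynomial `Q` with a simple root at `0` has
`Q'(0)` equal to the product of the negated nonzero roots, and `P(N) = 0` leaves only
`Q'(0) = (-1)^(h+1) P(-N) P'(N)`. The bounds on the eigenvalues determine the sign.
-/

section BlockMatrices

open Matrix

variable {n R : Type*} [Fintype n] [DecidableEq n] [CommRing R]

theorem det_fromBlocks_swap_symm (A B : Matrix n n R) :
    (fromBlocks A B B A).det = (A + B).det * (A - B).det := by
  have conj_eq : fromBlocks 1 1 0 1 * fromBlocks A B B A * fromBlocks 1 (-1) 0 1 =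
      fromBlocks (A + B) 0 B (A - B) := by
    simp only [fromBlocks_multiply]
    congr 1 <;> noncomm_ring
  simpa using congrArg det conj_eq

theorem charpoly_fromBlocks_swap_symm (A B : Matrix n n R) :
    (fromBlocks A B B A).charpoly = (A + B).charpoly * (A - B).charpoly := by
  have charmatrix_add : charmatrix A + -B.map C = charmatrix (A + B) := by
    simp [charmatrix, Matrix.map_add, sub_eq_add_neg, add_assoc, add_comm]
  have charmatrix_sub : charmatrix A - -B.map C = charmatrix (A - B) := by
    simp [charmatrix, Matrix.map_sub, sub_add]
  rw [charpoly, charmatrix_fromBlocks, det_fromBlocks_swap_symm, charmatrix_add, charmatrix_sub,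
    charpoly, charpoly]

theorem charpoly_neg (M : Matrix n n R) :
    (-M).charpoly = (-1) ^ Fintype.card n * M.charpoly.comp (-X) := by
  have charmatrix_neg : charmatrix (-M) = -(compRingHom (-X)).mapMatrix (charmatrix M) := by
    ext1 i j
    obtain rfl | hij := eq_or_ne i j <;> simp [*, add_comm]
  rw [charpoly, charmatrix_neg, det_neg, ← RingHom.map_det, coe_compRingHom_apply, charpoly]

/-- The weighted Laplacian `Δ = N • I - (0, M; M, 0)` of the bipartite double of an `N`-regular
graph whose (quotient) adjacency operator is `M`; here `M` and `N` are arbitrary. -/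
def bipartiteDoubleLaplacian (M : Matrix n n R) (N : R) : Matrix (n ⊕ n) (n ⊕ n) R :=
  N • 1 - fromBlocks 0 M M 0

theorem charpoly_bipartiteDoubleLaplacian (M : Matrix n n R) (N : R) :
    (bipartiteDoubleLaplacian M N).charpoly =
      ((-M).charpoly * M.charpoly).comp (X - C N) := by
  have eq_sub_scalar :
      bipartiteDoubleLaplacian M N = fromBlocks 0 (-M) (-M) 0 - scalar (n ⊕ n) (-N) := by
    simp [bipartiteDoubleLaplacian, fromBlocks_neg, smul_one_eq_diagonal, sub_eq_add_neg, add_comm]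
  rw [eq_sub_scalar, charpoly_sub_scalar, charpoly_fromBlocks_swap_symm, zero_add, zero_sub,
    neg_neg, C_neg, ← sub_eq_add_neg]

theorem eval_zero_charpoly_bipartiteDoubleLaplacian (M : Matrix n n R) (N : R) :
    (bipartiteDoubleLaplacian M N).charpoly.eval 0 =
      (-1) ^ Fintype.card n * (M.charpoly.eval N * M.charpoly.eval (-N)) := by
  simp [charpoly_bipartiteDoubleLaplacian, charpoly_neg, mul_assoc]

theorem eval_zero_derivative_charpoly_bipartiteDoubleLaplacian {M : Matrix n n R} {N : R}
    (hroot : M.charpoly.IsRoot N) :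
    (derivative (bipartiteDoubleLaplacian M N).charpoly).eval 0 =
      (-1) ^ (Fintype.card n + 1) *
        (M.charpoly.eval (-N) * (derivative M.charpoly).eval N) := by
  have eval_neg : (-M).charpoly.eval (-N) = 0 := by
    simp [charpoly_neg, hroot.eq_zero]
  have eval_derivative_neg : (derivative (-M).charpoly).eval (-N) =
      (-1) ^ (Fintype.card n + 1) * (derivative M.charpoly).eval N := by
    rw [charpoly_neg, ← C_1, ← C_neg, ← C_pow, derivative_C_mul]
    simp [derivative_comp, pow_succ]
  rw [charpoly_bipartiteDoubleLaplacian, derivative_comp, derivative_mul]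
  simp only [derivative_sub, derivative_X, derivative_C, sub_zero, one_mul, eval_comp, eval_add,
    eval_mul, eval_sub, eval_X, eval_C, zero_sub, eval_neg, eval_derivative_neg, zero_mul, add_zero]
  ring

theorem splits_charpoly_bipartiteDoubleLaplacian {M : Matrix n n R} (hM : M.charpoly.Splits)
    (N : R) : (bipartiteDoubleLaplacian M N).charpoly.Splits := by
  have splits_neg : (-M).charpoly.Splits := by
    rw [charpoly_neg, ← C_1, ← C_neg, ← C_pow]
    exact hM.comp_neg_X.C_mul _
  rw [charpoly_bipartiteDoubleLaplacian]
  exact (splits_neg.mul hM).comp_X_sub_C N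

end BlockMatrices

section Roots

variable {R : Type*} [CommRing R]

theorem rootMultiplicity_eq_one_of_eval_derivative_ne_zero {p : R[X]} {a : R}
    (hroot : p.IsRoot a) (hderiv : (derivative p).eval a ≠ 0) : p.rootMultiplicity a = 1 := by
  have hp : p ≠ 0 := by
    rintro rfl
    simp at hderiv
  have not_multiple : ¬ 1 < p.rootMultiplicity a := fun hlt =>
    hderiv ((one_lt_rootMultiplicity_iff_isRoot hp).mp hlt).2
  exact le_antisymm (not_lt.mp not_multiple) ((rootMultiplicity_pos hp).mpr hroot)

theorem filter_ne_eq_erase_of_count_eq_one {α : Type*} [DecidableEq α] {s : Multiset α} {a : α}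
    (ha : s.count a = 1) : s.filter (· ≠ a) = s.erase a := by
  ext b
  obtain rfl | hb := eq_or_ne b a
  · simp [ha]
  · rw [Multiset.count_filter_of_pos (p := (· ≠ a)) hb, Multiset.count_erase_of_ne hb]

theorem prod_filter_ne_zero_roots [IsDomain R] [DecidableEq R] {p : R[X]} (hsplits : p.Splits)
    (hmonic : p.Monic) (hsimple : p.rootMultiplicity 0 = 1) :
    (p.roots.filter (· ≠ 0)).prod = -((-1) ^ p.natDegree * (derivative p).eval 0) := by
  have count_zero : p.roots.count 0 = 1 := (count_roots p).trans hsimple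
  have zero_mem : 0 ∈ p.roots := Multiset.count_pos.mp (count_zero ▸ one_pos)
  rw [hsplits.eval_root_derivative hmonic zero_mem, filter_ne_eq_erase_of_count_eq_one count_zero,
    hsplits.natDegree_eq_card_roots, ← Multiset.card_erase_add_one zero_mem]
  simp [Multiset.prod_map_neg, pow_succ, ← mul_assoc, ← mul_pow]

end Roots

section Sign

open Lagrange

variable {ι R : Type*} [CommRing R] [LinearOrder R] [IsStrictOrderedRing R] {s : Finset ι}
  {v : ι → R}

theorem neg_one_pow_card_mul_eval_nodal_pos {x : R} (hx : ∀ i ∈ s, x < v i) :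
    0 < (-1) ^ s.card * (nodal s v).eval x := by
  rw [eval_nodal, ← Finset.prod_const, ← Finset.prod_mul_distrib]
  exact Finset.prod_pos fun i hi => by linarith [hx i hi]

theorem eval_derivative_nodal_pos [DecidableEq ι] {i : ι} (hi : i ∈ s)
    (hmax : ∀ j ∈ s.erase i, v j < v i) : 0 < (derivative (nodal s v)).eval (v i) := by
  rw [eval_nodal_derivative_eval_node_eq hi, eval_nodal]
  exact Finset.prod_pos fun j hj => sub_pos.mpr (hmax j hj)

theorem neg_one_pow_card_mul_eval_neg_mul_eval_derivative_nodal_pos [DecidableEq ι] {i : ι}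
    (hi : i ∈ s) (hpos : 0 < v i) (hdom : ∀ j ∈ s.erase i, |v j| < v i) :
    0 < (-1) ^ s.card *
      ((nodal s v).eval (-v i) * (derivative (nodal s v)).eval (v i)) := by
  have neg_lt : ∀ j ∈ s, -v i < v j := by
    intro j hj
    obtain rfl | hne := eq_or_ne j i
    · exact neg_lt_self hpos
    · exact (abs_lt.mp (hdom j (Finset.mem_erase.mpr ⟨hne, hj⟩))).1
  rw [← mul_assoc]
  exact mul_pos (neg_one_pow_card_mul_eval_nodal_pos neg_lt)
    (eval_derivative_nodal_pos hi fun j hj => (abs_lt.mp (hdom j hj)).2)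

end Sign

theorem stmt_6_general {n R : Type*} [Fintype n] [DecidableEq n] [CommRing R] [IsDomain R]
    [DecidableEq R] {M : Matrix n n R} {N : R} (hsplits : M.charpoly.Splits)
    (hroot : M.charpoly.IsRoot N)
    (hne : M.charpoly.eval (-N) * (derivative M.charpoly).eval N ≠ 0) :
    (bipartiteDoubleLaplacian M N).charpoly.rootMultiplicity 0 = 1 ∧
      ((bipartiteDoubleLaplacian M N).charpoly.roots.filter (· ≠ 0)).prod =
        (-1) ^ Fintype.card n *
          (M.charpoly.eval (-N) * (derivative M.charpoly).eval N) := by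
  have eval_derivative := eval_zero_derivative_charpoly_bipartiteDoubleLaplacian hroot
  have simple : (bipartiteDoubleLaplacian M N).charpoly.rootMultiplicity 0 = 1 := by
    apply rootMultiplicity_eq_one_of_eval_derivative_ne_zero
    · simp [eval_zero_charpoly_bipartiteDoubleLaplacian, hroot.eq_zero]
    · rw [eval_derivative]
      exact mul_ne_zero (by simp) hne
  refine ⟨simple, ?_⟩
  rw [prod_filter_ne_zero_roots (splits_charpoly_bipartiteDoubleLaplacian hsplits N)
    (Matrix.charpoly_monic _) simple, Matrix.charpoly_natDegree_eq_dim, Fintype.card_sum,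
    Even.neg_one_pow ⟨_, rfl⟩, eval_derivative]
  ring

/-- Suppose the characteristic polynomial `P` of `M` factors over `ℝ` as
`∏ i, (X - λ i)` with `λ 0 = N > 0` and `-N < λ i < N` for `i ≠ 0` (with `h ≥ 1`).
Then `0` is a root of the characteristic polynomial of `Δ = N • I - fromBlocks 0 M M 0`
of multiplicity exactly `1`, and the product of its nonzero real roots, counted with
multiplicity, equals `|P(-N) * P'(N)|`. -/
theorem stmt_6 (h : ℕ) (hh : 0 < h) (M : Matrix (Fin h) (Fin h) ℝ) (N : ℝ) (hN : 0 < N)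
    (l : Fin h → ℝ)
    (hM : M.charpoly = ∏ i : Fin h, (X - C (l i)))
    (hl : l ⟨0, hh⟩ = N)
    (hbound : ∀ i : Fin h, i ≠ ⟨0, hh⟩ → -N < l i ∧ l i < N) :
    Polynomial.rootMultiplicity 0
        (N • (1 : Matrix (Fin h ⊕ Fin h) (Fin h ⊕ Fin h) ℝ) -
          Matrix.fromBlocks 0 M M 0).charpoly = 1 ∧
      (Multiset.filter (fun x => x ≠ 0)
          (N • (1 : Matrix (Fin h ⊕ Fin h) (Fin h ⊕ Fin h) ℝ) -
            Matrix.fromBlocks 0 M M 0).charpoly.roots).prod =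
        |M.charpoly.eval (-N) * (Polynomial.derivative M.charpoly).eval N| := by
  subst hl
  have charpoly_eq : M.charpoly = Lagrange.nodal Finset.univ l := hM
  have hsplits : M.charpoly.Splits := hM ▸ Splits.prod fun i _ => Splits.X_sub_C (l i)
  have hroot : M.charpoly.IsRoot (l ⟨0, hh⟩) :=
    charpoly_eq ▸ Lagrange.eval_nodal_at_node (Finset.mem_univ _)
  have hpos := neg_one_pow_card_mul_eval_neg_mul_eval_derivative_nodal_pos (Finset.mem_univ _) hN
    fun j hj => abs_lt.mpr (hbound j (Finset.ne_of_mem_erase hj))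
  rw [← charpoly_eq, Finset.card_univ] at hpos
  have abs_eq := abs_of_pos hpos
  rw [abs_mul, abs_neg_one_pow, one_mul] at abs_eq
  rw [abs_eq]
  exact stmt_6_general hsplits hroot (right_ne_zero_of_mul hpos.ne')
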